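/- Every AE f ∈ 𝒜(−) can be expressed uniquely as a difference f = g − h, where g, h ∈ 𝒜(+, ×, ÷), 𝒱(g) ∩ 𝒱(h) = ∅ with 𝒱(g) ∪ 𝒱(h) = 𝒱(f), and h is of the first type. Moreover, f is of the third type if and only if either g ≅ h, or g ≅ G + h for some G ∈ 𝒜(+, ×, ÷) of the third type with 𝒱(G) ∩ 𝒱(h) = ∅. -/

import Mathlib

/- Common framework: `K = ℝ(x₁,x₂,…)` is the field of rational functions over `ℝ` in
countably many variables (the fraction field of `MvPolynomial ℕ ℝ`), arithmetic
expressions, the permutation action, isomorphism, types, the `EndsWith` classification,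
multilinear forms and monicity, isomorphism classes and their counting. -/

open MvPolynomial

noncomputable section

abbrev P : Type := MvPolynomial ℕ ℝ
abbrev K : Type := FractionRing P

def toK : P →+* K := algebraMap P K

/-- The variable `xᵢ`, as an element of `K`. -/
def Xv (i : ℕ) : K := toK (X i)

/-- `Vars f` : the set of variables on which `f` depends, i.e. the variables occurring in a
representation of `f` as a quotient of two coprime polynomials. -/
def Vars (f : K) : Set ℕ :=
  {i | ∃ p q : P, q ≠ 0 ∧ IsRelPrime p q ∧ f = toK p / toK q ∧ (i ∈ p.vars ∨ i ∈ q.vars)}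

/-- `𝒜` : the smallest subset of `K` containing every variable and closed under the four
binary operations applied to expressions with disjoint variable sets. -/
inductive IsAE : K → Prop
  | var (i : ℕ) : IsAE (Xv i)
  | add {g h : K} : IsAE g → IsAE h → Disjoint (Vars g) (Vars h) → IsAE (g + h)
  | sub {g h : K} : IsAE g → IsAE h → Disjoint (Vars g) (Vars h) → IsAE (g - h)
  | mul {g h : K} : IsAE g → IsAE h → Disjoint (Vars g) (Vars h) → IsAE (g * h)
  | div {g h : K} : IsAE g → IsAE h → Disjoint (Vars g) (Vars h) → IsAE (g / h)

/-- The action `σ·f` of a permutation of the variables on `K`, substituting `σ(xᵢ)` for `xᵢ`. -/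
def permAct (σ : Equiv.Perm ℕ) : K ≃+* K :=
  IsFractionRing.ringEquivOfRingEquiv (renameEquiv ℝ σ).toRingEquiv

/-- `f ≅ g` : `f` and `g` are isomorphic, i.e. differ by a permutation of the variables. -/
def Iso (f g : K) : Prop := ∃ σ : Equiv.Perm ℕ, permAct σ f = g

/-- First type: `-f ∉ 𝒜`. -/
def FirstType (f : K) : Prop := IsAE f ∧ ¬ IsAE (-f)

/-- Second type: `-f ∈ 𝒜` but `f ≇ -f`. -/
def SecondType (f : K) : Prop := IsAE f ∧ IsAE (-f) ∧ ¬ Iso f (-f)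

/-- Third type: `-f ∈ 𝒜` and `f ≅ -f`. -/
def ThirdType (f : K) : Prop := IsAE f ∧ IsAE (-f) ∧ Iso f (-f)

/-- The four binary operators. -/
inductive Op : Type
  | add | sub | mul | div
deriving DecidableEq

/-- `EndsWith f o` : the arithmetic expression `f` ends with the operator `o`. -/
inductive EndsWith : K → Op → Prop
  | var (i : ℕ) : EndsWith (Xv i) Op.mul
  | add_base {i j : ℕ} (hij : i ≠ j) : EndsWith (Xv i + Xv j) Op.add
  | sub_base {i j : ℕ} (hij : i ≠ j) : EndsWith (Xv i - Xv j) Op.sub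
  | mul_base {i j : ℕ} (hij : i ≠ j) : EndsWith (Xv i * Xv j) Op.mul
  | div_base {i j : ℕ} (hij : i ≠ j) : EndsWith (Xv i / Xv j) Op.div
  | add_rec {g h : K} {o₁ o₂ : Op} : IsAE g → IsAE h → Disjoint (Vars g) (Vars h) →
      3 ≤ (Vars (g + h)).ncard → o₁ ≠ Op.sub → o₂ ≠ Op.sub →
      EndsWith g o₁ → EndsWith h o₂ → EndsWith (g + h) Op.add
  | mul_rec {g h : K} {o₁ o₂ : Op} : IsAE g → IsAE h → Disjoint (Vars g) (Vars h) →
      3 ≤ (Vars (g * h)).ncard → o₁ ≠ Op.div → o₂ ≠ Op.div →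
      EndsWith g o₁ → EndsWith h o₂ → EndsWith (g * h) Op.mul
  | div_rec {g h : K} {o₁ o₂ : Op} : IsAE g → IsAE h → Disjoint (Vars g) (Vars h) →
      3 ≤ (Vars (g / h)).ncard → o₁ ≠ Op.div → o₂ ≠ Op.div →
      EndsWith g o₁ → EndsWith h o₂ → EndsWith (g / h) Op.div
  | sub_rec {g h : K} {o₁ o₂ : Op} : IsAE g → IsAE h → Disjoint (Vars g) (Vars h) →
      3 ≤ (Vars (g - h)).ncard → o₁ ≠ Op.sub → o₂ ≠ Op.sub → FirstType h →
      EndsWith g o₁ → EndsWith h o₂ → EndsWith (g - h) Op.sub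

/-- `f` ends with one of the operators in `s`. -/
def EndsIn (f : K) (s : Set Op) : Prop := ∃ o ∈ s, EndsWith f o

/-- The binary operation on `K` corresponding to an operator. -/
def applyOp (o : Op) (a b : K) : K :=
  match o with
  | Op.add => a + b
  | Op.sub => a - b
  | Op.mul => a * b
  | Op.div => a / b

/-- The variable index set `{1, …, n}` (for the variables `x₁, …, xₙ`). -/
def varsUpTo (n : ℕ) : Set ℕ := {i | 1 ≤ i ∧ i ≤ n}

/-- `𝒜ₙ` : arithmetic expressions whose variable set is exactly `{x₁, …, xₙ}`. -/
def AEn (n : ℕ) : Set K := {f | IsAE f ∧ Vars f = varsUpTo n}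

/-- A multilinear polynomial: degree at most `1` in each variable. -/
def Multilinear (p : P) : Prop := ∀ i : ℕ, p.degreeOf i ≤ 1

/-- The key of a (multilinear) monomial: the sorted list of variables occurring in it;
keys are compared in the lexicographic order on lists. -/
def monKey (m : ℕ →₀ ℕ) : List ℕ := m.support.sort (· ≤ ·)

/-- A (multilinear) polynomial is monic if the coefficient of its lexicographically
leading (i.e. first) monomial is positive. -/
def MonicML (p : P) : Prop :=
  ∃ m ∈ p.support, 0 < p.coeff m ∧ ∀ m' ∈ p.support, monKey m ≤ monKey m'

/-- `MLForm f F₁ F₂` : `F₁ / F₂` is the multilinear form of `f`: `F₁, F₂` are coprime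
multilinear polynomials, `F₂` is monic, and `f = F₁ / F₂`. -/
def MLForm (f : K) (F₁ F₂ : P) : Prop :=
  Multilinear F₁ ∧ Multilinear F₂ ∧ IsRelPrime F₁ F₂ ∧ F₂ ≠ 0 ∧ MonicML F₂ ∧
    f = toK F₁ / toK F₂

/-- A monic arithmetic expression: the numerator of its multilinear form is monic as well. -/
def MonicAE (f : K) : Prop := ∃ F₁ F₂ : P, MLForm f F₁ F₂ ∧ MonicML F₁

/-- The isomorphism class of `f`. -/
def classOf (f : K) : Set K := {g | Iso f g}

/-- `S̄` : the set of isomorphism classes of elements of `S`. -/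
def classes (S : Set K) : Set (Set K) := classOf '' S

/-- `|S̄|` : the number of isomorphism classes of elements of `S`. -/
def countClasses (S : Set K) : ℕ := (classes S).ncard

/-- The number of isomorphism classes of elements of `S` depending on exactly `k` variables. -/
def gradeCount (S : Set K) (k : ℕ) : ℕ := countClasses {f ∈ S | (Vars f).ncard = k}

/-- `ω_n` for a graded family having `N k` elements in grade `k` : the sum over all
partitions `(k₁^{m₁},…,k_s^{m_s})` of `n` of `∏ⱼ C(N kⱼ + mⱼ - 1, mⱼ)`. -/
def omega (N : ℕ → ℕ) (n : ℕ) : ℕ :=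
  ∑ p : n.Partition,
    ∏ k ∈ p.parts.toFinset, Nat.choose (N k + p.parts.count k - 1) (p.parts.count k)

/-- `ω_n′` : the same sum restricted to non-trivial partitions, i.e. `ω_n - N n`. -/
def omega' (N : ℕ → ℕ) (n : ℕ) : ℕ := omega N n - N n

/-- `𝒜(s)` : arithmetic expressions ending with one of the operators in `s`. -/
def Aset (s : Set Op) : Set K := {f | IsAE f ∧ EndsIn f s}

/-- `ℱ(s)` : first-type arithmetic expressions ending with one of the operators in `s`. -/
def Fset (s : Set Op) : Set K := {f | FirstType f ∧ EndsIn f s}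

/-- `ℬ(s)` : second-type arithmetic expressions ending with one of the operators in `s`. -/
def Bset (s : Set Op) : Set K := {f | SecondType f ∧ EndsIn f s}

/-- `𝒞(s)` : third-type arithmetic expressions ending with one of the operators in `s`. -/
def Cset (s : Set Op) : Set K := {f | ThirdType f ∧ EndsIn f s}

/-- `ℳℬ(s)` : monic second-type arithmetic expressions ending with an operator in `s`. -/
def MBset (s : Set Op) : Set K := {f | SecondType f ∧ MonicAE f ∧ EndsIn f s}


/-- A decomposition of `f` as a difference `f = g - h` with `g, h ∈ 𝒜(+,×,÷)`,
`𝒱(g) ∩ 𝒱(h) = ∅`, `𝒱(g) ∪ 𝒱(h) = 𝒱(f)`, and `h` of the first type. -/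
def SubDecomp (f g h : K) : Prop :=
  IsAE g ∧ IsAE h ∧
  EndsIn g {Op.add, Op.mul, Op.div} ∧ EndsIn h {Op.add, Op.mul, Op.div} ∧
  FirstType h ∧ Disjoint (Vars g) (Vars h) ∧ Vars g ∪ Vars h = Vars f ∧ f = g - h

/-! ### Variables of a rational function -/

lemma toK_inj : Function.Injective toK := IsFractionRing.injective P K

lemma toK_ne {q : P} (h : q ≠ 0) : toK q ≠ 0 := by
  intro h0
  exact h (toK_inj (by rw [h0, map_zero]))

lemma vars_dvd {p a : P} (h : p ∣ a) (ha : a ≠ 0) : p.vars ⊆ a.vars := by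
  obtain ⟨c, rfl⟩ := h
  have hp : p ≠ 0 := left_ne_zero_of_mul ha
  have hc : c ≠ 0 := right_ne_zero_of_mul ha
  intro i hi
  rw [mem_vars_iff_degreeOf_ne_zero] at hi ⊢
  rw [degreeOf_mul_eq hp hc]
  omega

/-- `f` can be written as a quotient of polynomials in the variables from `S`. -/
def InS (S : Set ℕ) (f : K) : Prop :=
  ∃ a b : P, b ≠ 0 ∧ f = toK a / toK b ∧ (a.vars : Set ℕ) ⊆ S ∧ (b.vars : Set ℕ) ⊆ S

lemma exists_coprime (f : K) :
    ∃ p q : P, q ≠ 0 ∧ IsRelPrime p q ∧ f = toK p / toK q := by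
  obtain ⟨a, b, hab, rfl⟩ := IsFractionRing.exists_reduced_fraction (A := P) f
  exact ⟨a, b, nonZeroDivisors.ne_zero b.2, hab, IsFractionRing.mk'_eq_div _⟩

lemma vars_subset_of_inS {S : Set ℕ} {f : K} (h : InS S f) : Vars f ⊆ S := by
  obtain ⟨a, b, hb, hf, ha', hb'⟩ := h
  rintro i ⟨p, q, hq, hpq, hf', hi⟩
  have e : a * q = p * b := by
    apply toK_inj
    rw [map_mul, map_mul]
    rw [hf, div_eq_div_iff (toK_ne hb) (toK_ne hq)] at hf'
    exact hf'
  have h1 : q ∣ b := hpq.symm.dvd_of_dvd_mul_left (e ▸ Dvd.intro_left a rfl)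
  have h2 : p ∣ a := hpq.dvd_of_dvd_mul_right (e ▸ Dvd.intro b rfl)
  rcases hi with hi | hi
  · by_cases ha : a = 0
    · subst ha
      have : p = 0 := by
        have : p * b = 0 := by rw [← e, zero_mul]
        exact (mul_eq_zero.1 this).resolve_right hb
      subst this
      simp at hi
    · exact ha' (vars_dvd h2 ha hi)
  · exact hb' (vars_dvd h1 hb hi)

lemma inS_of_vars_subset {S : Set ℕ} {f : K} (h : Vars f ⊆ S) : InS S f := by
  obtain ⟨p, q, hq, hpq, hf⟩ := exists_coprime f
  exact ⟨p, q, hq, hf, fun i hi => h ⟨p, q, hq, hpq, hf, Or.inl hi⟩,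
    fun i hi => h ⟨p, q, hq, hpq, hf, Or.inr hi⟩⟩

lemma vars_subset_iff {S : Set ℕ} {f : K} : Vars f ⊆ S ↔ InS S f :=
  ⟨inS_of_vars_subset, vars_subset_of_inS⟩

lemma vars_finite (f : K) : (Vars f).Finite := by
  obtain ⟨p, q, hq, hpq, hf⟩ := exists_coprime f
  have : Vars f ⊆ ↑(p.vars ∪ q.vars) := by
    apply vars_subset_of_inS
    exact ⟨p, q, hq, hf, by intro i hi; simp at hi ⊢; tauto, by intro i hi; simp at hi ⊢; tauto⟩
  exact (Finset.finite_toSet _).subset this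

lemma vmul {S : Set ℕ} {a b : P} (ha : (a.vars : Set ℕ) ⊆ S) (hb : (b.vars : Set ℕ) ⊆ S) :
    ((a * b).vars : Set ℕ) ⊆ S := by
  intro i hi
  have := vars_mul a b hi
  rw [Finset.mem_union] at this
  exact this.elim (fun h => ha h) (fun h => hb h)

lemma vadd {S : Set ℕ} {a b : P} (ha : (a.vars : Set ℕ) ⊆ S) (hb : (b.vars : Set ℕ) ⊆ S) :
    ((a + b).vars : Set ℕ) ⊆ S := by
  intro i hi
  have := vars_add_subset a b hi
  rw [Finset.mem_union] at this
  exact this.elim (fun h => ha h) (fun h => hb h)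

lemma vs_add {S : Set ℕ} {f g : K} (hf : Vars f ⊆ S) (hg : Vars g ⊆ S) : Vars (f + g) ⊆ S := by
  obtain ⟨a, b, hb, rfl, h1, h2⟩ := inS_of_vars_subset hf
  obtain ⟨c, d, hd, rfl, h3, h4⟩ := inS_of_vars_subset hg
  refine vars_subset_of_inS ⟨a * d + b * c, b * d, mul_ne_zero hb hd, ?_,
    vadd (vmul h1 h4) (vmul h2 h3), vmul h2 h4⟩
  rw [div_add_div _ _ (toK_ne hb) (toK_ne hd)]
  simp

lemma vs_mul {S : Set ℕ} {f g : K} (hf : Vars f ⊆ S) (hg : Vars g ⊆ S) : Vars (f * g) ⊆ S := by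
  obtain ⟨a, b, hb, rfl, h1, h2⟩ := inS_of_vars_subset hf
  obtain ⟨c, d, hd, rfl, h3, h4⟩ := inS_of_vars_subset hg
  refine vars_subset_of_inS ⟨a * c, b * d, mul_ne_zero hb hd, ?_, vmul h1 h3, vmul h2 h4⟩
  rw [div_mul_div_comm]
  simp

lemma vs_neg {S : Set ℕ} {f : K} (hf : Vars f ⊆ S) : Vars (-f) ⊆ S := by
  obtain ⟨a, b, hb, rfl, h1, h2⟩ := inS_of_vars_subset hf
  refine vars_subset_of_inS ⟨-a, b, hb, ?_, by rwa [vars_neg], h2⟩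
  rw [map_neg, neg_div]

lemma vs_inv {S : Set ℕ} {f : K} (hf : Vars f ⊆ S) : Vars (f⁻¹) ⊆ S := by
  obtain ⟨a, b, hb, rfl, h1, h2⟩ := inS_of_vars_subset hf
  by_cases ha : a = 0
  · exact vars_subset_of_inS ⟨0, 1, one_ne_zero, by simp [ha], by simp, by simp⟩
  · exact vars_subset_of_inS ⟨b, a, ha, by rw [inv_div], h2, h1⟩

lemma vs_sub {S : Set ℕ} {f g : K} (hf : Vars f ⊆ S) (hg : Vars g ⊆ S) : Vars (f - g) ⊆ S := by
  rw [sub_eq_add_neg]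
  exact vs_add hf (vs_neg hg)

lemma vs_div {S : Set ℕ} {f g : K} (hf : Vars f ⊆ S) (hg : Vars g ⊆ S) : Vars (f / g) ⊆ S := by
  rw [div_eq_mul_inv]
  exact vs_mul hf (vs_inv hg)

lemma Vars_neg (f : K) : Vars (-f) = Vars f :=
  Set.Subset.antisymm (vs_neg le_rfl) (by
    have := vs_neg (le_refl (Vars (-f)))
    rwa [neg_neg] at this)

lemma Vars_inv (f : K) : Vars (f⁻¹) = Vars f :=
  Set.Subset.antisymm (vs_inv le_rfl) (by
    have := vs_inv (le_refl (Vars (f⁻¹)))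
    rwa [inv_inv] at this)

lemma Vars_const (c : ℝ) : Vars (toK (C c)) = ∅ := by
  apply Set.subset_empty_iff.1
  exact vars_subset_of_inS ⟨C c, 1, one_ne_zero, by simp, by simp, by simp⟩

lemma Vars_zero : Vars (0 : K) = ∅ := by
  have := Vars_const 0
  simpa using this

lemma eq_const {f : K} (h : Vars f ⊆ ∅) : ∃ c : ℝ, f = toK (C c) := by
  obtain ⟨a, b, hb, rfl, h1, h2⟩ := inS_of_vars_subset h
  have ha' : a.vars = ∅ := by simpa using h1
  have hb' : b.vars = ∅ := by simpa using h2
  rw [vars_eq_empty_iff_eq_C] at ha' hb'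
  have hb0 : b.coeff 0 ≠ 0 := by
    intro h0
    rw [h0] at hb'
    exact hb (by simpa using hb')
  refine ⟨a.coeff 0 / b.coeff 0, ?_⟩
  rw [div_eq_iff (toK_ne hb), ← map_mul]
  congr 1
  conv_lhs => rw [ha']
  conv_rhs => rw [hb']
  rw [coeff_zero_C, ← C_mul, div_mul_cancel₀ _ hb0]

lemma Vars_X (i : ℕ) : Vars (Xv i) = {i} := by
  apply Set.Subset.antisymm
  · exact vars_subset_of_inS ⟨X i, 1, one_ne_zero, by simp [Xv], by simp [vars_X], by simp⟩
  · rintro j rfl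
    exact ⟨X j, 1, one_ne_zero, isRelPrime_one_right, by simp [Xv], by simp [vars_X]⟩

lemma subset_of_disj {A B C' : Set ℕ} (h : ∀ i ∈ A, i ∉ B → i ∈ C') (hd : Disjoint A B) :
    A ⊆ C' := fun i hi => h i hi (Set.disjoint_left.1 hd hi)

lemma Vars_add {g h : K} (hd : Disjoint (Vars g) (Vars h)) :
    Vars (g + h) = Vars g ∪ Vars h := by
  apply Set.Subset.antisymm
  · exact vs_add Set.subset_union_left Set.subset_union_right
  · apply Set.union_subset
    · refine subset_of_disj (fun i hi hn => ?_) hd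
      by_contra hc
      have : Vars (g + h - h) ⊆ {i}ᶜ := vs_sub (by simpa using hc) (by simpa using hn)
      rw [add_sub_cancel_right] at this
      exact this hi rfl
    · refine subset_of_disj (fun i hi hn => ?_) hd.symm
      by_contra hc
      have : Vars (g + h - g) ⊆ {i}ᶜ := vs_sub (by simpa using hc) (by simpa using hn)
      rw [add_sub_cancel_left] at this
      exact this hi rfl

lemma Vars_sub {g h : K} (hd : Disjoint (Vars g) (Vars h)) :
    Vars (g - h) = Vars g ∪ Vars h := by
  rw [sub_eq_add_neg, Vars_add (by rwa [Vars_neg]), Vars_neg]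

lemma ne_zero_of_vars {f : K} (h : (Vars f).Nonempty) : f ≠ 0 := by
  rintro rfl
  rw [Vars_zero] at h
  exact Set.not_nonempty_empty h

lemma Vars_mul {g h : K} (hd : Disjoint (Vars g) (Vars h)) (hg : (Vars g).Nonempty)
    (hh : (Vars h).Nonempty) : Vars (g * h) = Vars g ∪ Vars h := by
  apply Set.Subset.antisymm
  · exact vs_mul Set.subset_union_left Set.subset_union_right
  · apply Set.union_subset
    · refine subset_of_disj (fun i hi hn => ?_) hd
      by_contra hc
      have : Vars (g * h / h) ⊆ {i}ᶜ := vs_div (by simpa using hc) (by simpa using hn)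
      rw [mul_div_cancel_right₀ _ (ne_zero_of_vars hh)] at this
      exact this hi rfl
    · refine subset_of_disj (fun i hi hn => ?_) hd.symm
      by_contra hc
      have : Vars (g * h / g) ⊆ {i}ᶜ := vs_div (by simpa using hc) (by simpa using hn)
      rw [mul_div_cancel_left₀ _ (ne_zero_of_vars hg)] at this
      exact this hi rfl

lemma Vars_div {g h : K} (hd : Disjoint (Vars g) (Vars h)) (hg : (Vars g).Nonempty)
    (hh : (Vars h).Nonempty) : Vars (g / h) = Vars g ∪ Vars h := by
  rw [div_eq_mul_inv, Vars_mul (by rwa [Vars_inv]) hg (by rwa [Vars_inv]), Vars_inv]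

/-! ### Homomorphisms -/

/-- Two ring homomorphisms agreeing on constants and on the variables of `f` agree on `f`. -/
lemma hom_congr_K (φ ψ : K →+* K) (hC : ∀ c : ℝ, φ (toK (C c)) = ψ (toK (C c))) (f : K)
    (hX : ∀ i ∈ Vars f, φ (Xv i) = ψ (Xv i)) : φ f = ψ f := by
  obtain ⟨a, b, hb, hf, h1, h2⟩ := inS_of_vars_subset (le_refl (Vars f))
  have key : ∀ p : P, (p.vars : Set ℕ) ⊆ Vars f → φ (toK p) = ψ (toK p) := by
    intro p hp
    exact hom_congr_vars (f₁ := φ.comp toK) (f₂ := ψ.comp toK) (p₁ := p) (p₂ := p)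
      (by ext c; exact hC c) (fun i hi _ => hX i (hp hi)) rfl
  rw [hf, map_div₀, map_div₀, key a h1, key b h2]

lemma permAct_toK (σ : Equiv.Perm ℕ) (p : P) : permAct σ (toK p) = toK (rename σ p) := by
  unfold permAct toK
  rw [IsFractionRing.ringEquivOfRingEquiv_algebraMap]
  rfl

lemma permAct_C (σ : Equiv.Perm ℕ) (c : ℝ) : permAct σ (toK (C c)) = toK (C c) := by
  rw [permAct_toK, rename_C]

lemma permAct_X (σ : Equiv.Perm ℕ) (i : ℕ) : permAct σ (Xv i) = Xv (σ i) := by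
  unfold Xv
  rw [permAct_toK, rename_X]

lemma permAct_congr {σ τ : Equiv.Perm ℕ} {f : K} (h : ∀ i ∈ Vars f, σ i = τ i) :
    permAct σ f = permAct τ f :=
  hom_congr_K (permAct σ : K →+* K) (permAct τ : K →+* K)
    (fun c => by simp [permAct_C]) f (fun i hi => by simp [permAct_X, h i hi])

lemma permAct_mul (σ τ : Equiv.Perm ℕ) (f : K) :
    permAct (σ * τ) f = permAct σ (permAct τ f) :=
  hom_congr_K (permAct (σ * τ) : K →+* K) ((permAct σ : K →+* K).comp (permAct τ : K →+* K))
    (fun c => by simp [permAct_C]) f (fun i hi => by simp [permAct_X])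

lemma permAct_one (f : K) : permAct 1 f = f :=
  hom_congr_K (permAct 1 : K →+* K) (RingHom.id K)
    (fun c => by simp [permAct_C]) f (fun i hi => by simp [permAct_X])

lemma permAct_inv_left (σ : Equiv.Perm ℕ) (f : K) : permAct σ⁻¹ (permAct σ f) = f := by
  rw [← permAct_mul, inv_mul_cancel, permAct_one]

lemma permAct_inv_right (σ : Equiv.Perm ℕ) (f : K) : permAct σ (permAct σ⁻¹ f) = f := by
  rw [← permAct_mul, mul_inv_cancel, permAct_one]

lemma permAct_fix {σ : Equiv.Perm ℕ} {f : K} (h : ∀ i ∈ Vars f, σ i = i) :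
    permAct σ f = f := by
  rw [permAct_congr (τ := 1) (by simpa using h), permAct_one]

lemma Vars_perm_sub (σ : Equiv.Perm ℕ) (f : K) : Vars (permAct σ f) ⊆ σ '' Vars f := by
  obtain ⟨a, b, hb, hf, h1, h2⟩ := inS_of_vars_subset (le_refl (Vars f))
  have key : ∀ p : P, (p.vars : Set ℕ) ⊆ Vars f →
      ((rename σ p).vars : Set ℕ) ⊆ σ '' Vars f := by
    intro p hp i hi
    have := vars_rename σ p hi
    rw [Finset.mem_image] at this
    obtain ⟨j, hj, rfl⟩ := this
    exact ⟨j, hp hj, rfl⟩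
  refine vars_subset_of_inS ⟨rename σ a, rename σ b, ?_, ?_, key a h1, key b h2⟩
  · intro h0
    exact hb (rename_injective σ σ.injective (by rw [h0, map_zero]))
  · conv_lhs => rw [hf]
    rw [map_div₀, permAct_toK, permAct_toK]

lemma Vars_perm (σ : Equiv.Perm ℕ) (f : K) : Vars (permAct σ f) = σ '' Vars f := by
  apply Set.Subset.antisymm (Vars_perm_sub σ f)
  rintro _ ⟨i, hi, rfl⟩
  have h := Vars_perm_sub σ⁻¹ (permAct σ f)
  rw [permAct_inv_left] at h
  obtain ⟨j, hj, rfl⟩ := h hi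
  simpa using hj

lemma disj_perm (σ : Equiv.Perm ℕ) {f g : K} (h : Disjoint (Vars f) (Vars g)) :
    Disjoint (Vars (permAct σ f)) (Vars (permAct σ g)) := by
  rw [Vars_perm, Vars_perm]
  exact (Set.disjoint_image_iff σ.injective).2 h

lemma disj_perm_iff (σ : Equiv.Perm ℕ) {f g : K} :
    Disjoint (Vars (permAct σ f)) (Vars (permAct σ g)) ↔ Disjoint (Vars f) (Vars g) := by
  rw [Vars_perm, Vars_perm]
  exact Set.disjoint_image_iff σ.injective

lemma ncard_perm (σ : Equiv.Perm ℕ) (f : K) : (Vars (permAct σ f)).ncard = (Vars f).ncard := by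
  rw [Vars_perm]
  exact Set.ncard_image_of_injective _ σ.injective

/-! ### Scaling -/

/-- Scaling endomorphism of the polynomial ring. -/
def scP (a : ℕ → ℝˣ) : P →ₐ[ℝ] P := aeval (fun i => C (a i : ℝ) * X i)

lemma scP_inj (a : ℕ → ℝˣ) : Function.Injective (scP a) := by
  have : (scP a⁻¹).comp (scP a) = AlgHom.id ℝ P := by
    apply MvPolynomial.algHom_ext
    intro i
    rw [AlgHom.comp_apply]
    unfold scP
    rw [aeval_X, map_mul, algHom_C, aeval_X, MvPolynomial.algebraMap_eq, ← mul_assoc, ← C_mul]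
    simp
  exact Function.LeftInverse.injective (g := scP a⁻¹) (fun x => AlgHom.congr_fun this x)

/-- Scaling endomorphism of `K`. -/
def sc (a : ℕ → ℝˣ) : K →+* K :=
  IsFractionRing.map (A := P) (B := P) (K := K) (L := K) (j := (scP a : P →+* P)) (scP_inj a)

lemma sc_toK (a : ℕ → ℝˣ) (p : P) : sc a (toK p) = toK (scP a p) := by
  unfold sc toK IsFractionRing.map
  rw [IsLocalization.map_eq]
  rfl

lemma sc_C (a : ℕ → ℝˣ) (c : ℝ) : sc a (toK (C c)) = toK (C c) := by
  rw [sc_toK, scP, algHom_C, MvPolynomial.algebraMap_eq]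

lemma sc_X (a : ℕ → ℝˣ) (i : ℕ) : sc a (Xv i) = toK (C (a i : ℝ)) * Xv i := by
  rw [Xv, sc_toK, scP, aeval_X, map_mul]

lemma sc_mul (a b : ℕ → ℝˣ) (f : K) : sc (a * b) f = sc a (sc b f) :=
  hom_congr_K (sc (a * b)) ((sc a).comp (sc b)) (fun c => by simp [sc_C]) f
    (fun i hi => by simp [sc_X, sc_C]; ring)

lemma sc_fix {a : ℕ → ℝˣ} {f : K} (h : ∀ i ∈ Vars f, a i = 1) : sc a f = f :=
  hom_congr_K (sc a) (RingHom.id K) (fun c => by simp [sc_C]) f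
    (fun i hi => by simp [sc_X, h i hi])

/-! ### Arithmetic expressions -/

lemma IsAE.nonempty {f : K} (hf : IsAE f) : (Vars f).Nonempty := by
  induction hf with
  | var i => rw [Vars_X]; exact Set.singleton_nonempty i
  | add _ _ hd ihg _ => rw [Vars_add hd]; exact ihg.inl
  | sub _ _ hd ihg _ => rw [Vars_sub hd]; exact ihg.inl
  | mul _ _ hd ihg ihh => rw [Vars_mul hd ihg ihh]; exact ihg.inl
  | div _ _ hd ihg ihh => rw [Vars_div hd ihg ihh]; exact ihg.inl

lemma two_le_union {A B : Set ℕ} (hA : A.Nonempty) (hB : B.Nonempty) (hfA : A.Finite)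
    (hfB : B.Finite) (hd : Disjoint A B) : 2 ≤ (A ∪ B).ncard := by
  rw [Set.ncard_union_eq hd hfA hfB]
  have := (Set.ncard_pos hfA).2 hA
  have := (Set.ncard_pos hfB).2 hB
  omega

lemma IsAE.var_or {f : K} (hf : IsAE f) : (∃ i, f = Xv i) ∨ 2 ≤ (Vars f).ncard := by
  cases hf with
  | var i => exact Or.inl ⟨i, rfl⟩
  | add hg hh hd =>
    right; rw [Vars_add hd]
    exact two_le_union hg.nonempty hh.nonempty (vars_finite _) (vars_finite _) hd
  | sub hg hh hd =>
    right; rw [Vars_sub hd]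
    exact two_le_union hg.nonempty hh.nonempty (vars_finite _) (vars_finite _) hd
  | mul hg hh hd =>
    right; rw [Vars_mul hd hg.nonempty hh.nonempty]
    exact two_le_union hg.nonempty hh.nonempty (vars_finite _) (vars_finite _) hd
  | div hg hh hd =>
    right; rw [Vars_div hd hg.nonempty hh.nonempty]
    exact two_le_union hg.nonempty hh.nonempty (vars_finite _) (vars_finite _) hd

lemma firstType_X (j : ℕ) : FirstType (Xv j) := by
  refine ⟨IsAE.var j, fun h => ?_⟩
  rcases h.var_or with ⟨i, hi⟩ | h2
  · have h1 : Vars (-Xv j) = {i} := by rw [hi, Vars_X]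
    rw [Vars_neg, Vars_X, Set.singleton_eq_singleton_iff] at h1
    subst h1
    have h2 : (2 : K) * Xv j = 0 := by linear_combination -hi
    have h3 : Xv j ≠ 0 := ne_zero_of_vars (by rw [Vars_X]; exact Set.singleton_nonempty j)
    rcases mul_eq_zero.1 h2 with h | h
    · exact two_ne_zero h
    · exact h3 h
  · rw [Vars_neg, Vars_X, Set.ncard_singleton] at h2
    omega

lemma disj_X {i j : ℕ} (h : i ≠ j) : Disjoint (Vars (Xv i)) (Vars (Xv j)) := by
  rw [Vars_X, Vars_X]
  simpa using h

lemma EndsWith.isAE {f : K} {o : Op} (h : EndsWith f o) : IsAE f := by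
  cases h with
  | var i => exact IsAE.var i
  | add_base hij => exact (IsAE.var _).add (IsAE.var _) (disj_X hij)
  | sub_base hij => exact (IsAE.var _).sub (IsAE.var _) (disj_X hij)
  | mul_base hij => exact (IsAE.var _).mul (IsAE.var _) (disj_X hij)
  | div_base hij => exact (IsAE.var _).div (IsAE.var _) (disj_X hij)
  | add_rec hg hh hd => exact hg.add hh hd
  | mul_rec hg hh hd => exact hg.mul hh hd
  | div_rec hg hh hd => exact hg.div hh hd
  | sub_rec hg hh hd => exact hg.sub hh hd

/-- `f ∈ 𝒜(+,×,÷)`. -/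
def AP (f : K) : Prop := ∃ o, o ≠ Op.sub ∧ EndsWith f o

lemma AP.isAE {f : K} (h : AP f) : IsAE f := by
  obtain ⟨o, _, h⟩ := h
  exact h.isAE

lemma AP_iff {f : K} : AP f ↔ EndsIn f {Op.add, Op.mul, Op.div} := by
  constructor
  · rintro ⟨o, ho, h⟩
    refine ⟨o, ?_, h⟩
    cases o <;> simp at ho ⊢
  · rintro ⟨o, ho, h⟩
    refine ⟨o, ?_, h⟩
    rintro rfl
    simp at ho

lemma AP.add {g h : K} (hg : AP g) (hh : AP h) (hd : Disjoint (Vars g) (Vars h)) :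
    AP (g + h) := by
  refine ⟨Op.add, by simp, ?_⟩
  by_cases h3 : 3 ≤ (Vars (g + h)).ncard
  · obtain ⟨o, ho, hg'⟩ := hg
    obtain ⟨o', ho', hh'⟩ := hh
    exact EndsWith.add_rec hg'.isAE hh'.isAE hd h3 ho ho' hg' hh'
  · rw [Vars_add hd, Set.ncard_union_eq hd (vars_finite _) (vars_finite _)] at h3
    have h1 := (Set.ncard_pos (vars_finite g)).2 hg.isAE.nonempty
    have h2 := (Set.ncard_pos (vars_finite h)).2 hh.isAE.nonempty
    rcases hg.isAE.var_or with ⟨i, rfl⟩ | h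
    · rcases hh.isAE.var_or with ⟨j, rfl⟩ | h
      · apply EndsWith.add_base
        rintro rfl
        rw [Vars_X] at hd
        simp at hd
      · omega
    · omega

lemma IsAE.perm (σ : Equiv.Perm ℕ) {f : K} (hf : IsAE f) : IsAE (permAct σ f) := by
  induction hf with
  | var i => rw [permAct_X]; exact IsAE.var _
  | add _ _ hd ihg ihh => rw [map_add]; exact ihg.add ihh (disj_perm σ hd)
  | sub _ _ hd ihg ihh => rw [map_sub]; exact ihg.sub ihh (disj_perm σ hd)
  | mul _ _ hd ihg ihh => rw [map_mul]; exact ihg.mul ihh (disj_perm σ hd)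
  | div _ _ hd ihg ihh => rw [map_div₀]; exact ihg.div ihh (disj_perm σ hd)

lemma FirstType.perm (σ : Equiv.Perm ℕ) {f : K} (hf : FirstType f) : FirstType (permAct σ f) := by
  refine ⟨hf.1.perm σ, fun h => hf.2 ?_⟩
  have := h.perm σ⁻¹
  rwa [map_neg, permAct_inv_left] at this

lemma EndsWith.perm (σ : Equiv.Perm ℕ) {f : K} {o : Op} (h : EndsWith f o) :
    EndsWith (permAct σ f) o := by
  induction h with
  | var i => rw [permAct_X]; exact EndsWith.var _
  | add_base hij =>
    rw [map_add, permAct_X, permAct_X]; exact EndsWith.add_base (fun h => hij (σ.injective h))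
  | sub_base hij =>
    rw [map_sub, permAct_X, permAct_X]; exact EndsWith.sub_base (fun h => hij (σ.injective h))
  | mul_base hij =>
    rw [map_mul, permAct_X, permAct_X]; exact EndsWith.mul_base (fun h => hij (σ.injective h))
  | div_base hij =>
    rw [map_div₀, permAct_X, permAct_X]; exact EndsWith.div_base (fun h => hij (σ.injective h))
  | add_rec hg hh hd h3 h1 h2 _ _ ihg ihh =>
    rw [← ncard_perm σ, map_add] at h3
    rw [map_add]
    exact EndsWith.add_rec (hg.perm σ) (hh.perm σ) (disj_perm σ hd) h3 h1 h2 ihg ihh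
  | mul_rec hg hh hd h3 h1 h2 _ _ ihg ihh =>
    rw [← ncard_perm σ, map_mul] at h3
    rw [map_mul]
    exact EndsWith.mul_rec (hg.perm σ) (hh.perm σ) (disj_perm σ hd) h3 h1 h2 ihg ihh
  | div_rec hg hh hd h3 h1 h2 _ _ ihg ihh =>
    rw [← ncard_perm σ, map_div₀] at h3
    rw [map_div₀]
    exact EndsWith.div_rec (hg.perm σ) (hh.perm σ) (disj_perm σ hd) h3 h1 h2 ihg ihh
  | sub_rec hg hh hd h3 h1 h2 hF _ _ ihg ihh =>
    rw [← ncard_perm σ, map_sub] at h3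
    rw [map_sub]
    exact EndsWith.sub_rec (hg.perm σ) (hh.perm σ) (disj_perm σ hd) h3 h1 h2 (hF.perm σ) ihg ihh

lemma AP.perm (σ : Equiv.Perm ℕ) {f : K} (h : AP f) : AP (permAct σ f) := by
  obtain ⟨o, ho, h⟩ := h
  exact ⟨o, ho, h.perm σ⟩

/-! ### No additive constants -/

lemma IsAE.scaling {f : K} (hf : IsAE f) :
    ∃ a : ℕ → ℝˣ, (∀ i, i ∉ Vars f → a i = 1) ∧ sc a f = 2 * f := by
  induction hf with
  | var i =>
    refine ⟨fun j => if j = i then Units.mk0 2 two_ne_zero else 1, ?_, ?_⟩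
    · intro j hj
      rw [Vars_X] at hj
      have : j ≠ i := by simpa using hj
      simp [this]
    · rw [sc_X]
      simp only [if_true, Units.val_mk0]
      rw [show (C (2 : ℝ) : P) = 2 from map_ofNat C 2, map_ofNat]
  | @add g h hg hh hd ihg ihh =>
    obtain ⟨a, ha, ha'⟩ := ihg
    obtain ⟨b, hb, hb'⟩ := ihh
    have e1 : sc b g = g := sc_fix (fun i hi => hb i (Set.disjoint_left.1 hd hi))
    have e2 : sc a h = h := sc_fix (fun i hi => ha i (Set.disjoint_right.1 hd hi))
    refine ⟨a * b, ?_, ?_⟩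
    · intro i hi
      rw [Vars_add hd, Set.mem_union, not_or] at hi
      simp [ha i hi.1, hb i hi.2]
    · rw [sc_mul, map_add, e1, hb', map_add, map_mul, e2, ha', map_ofNat]
      ring
  | @sub g h hg hh hd ihg ihh =>
    obtain ⟨a, ha, ha'⟩ := ihg
    obtain ⟨b, hb, hb'⟩ := ihh
    have e1 : sc b g = g := sc_fix (fun i hi => hb i (Set.disjoint_left.1 hd hi))
    have e2 : sc a h = h := sc_fix (fun i hi => ha i (Set.disjoint_right.1 hd hi))
    refine ⟨a * b, ?_, ?_⟩
    · intro i hi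
      rw [Vars_sub hd, Set.mem_union, not_or] at hi
      simp [ha i hi.1, hb i hi.2]
    · rw [sc_mul, map_sub, e1, hb', map_sub, map_mul, e2, ha', map_ofNat]
      ring
  | @mul g h hg hh hd ihg ihh =>
    obtain ⟨a, ha, ha'⟩ := ihg
    have e2 : sc a h = h := sc_fix (fun i hi => ha i (Set.disjoint_right.1 hd hi))
    refine ⟨a, ?_, ?_⟩
    · intro i hi
      rw [Vars_mul hd hg.nonempty hh.nonempty, Set.mem_union, not_or] at hi
      exact ha i hi.1
    · rw [map_mul, e2, ha', mul_assoc]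
  | @div g h hg hh hd ihg ihh =>
    obtain ⟨a, ha, ha'⟩ := ihg
    have e2 : sc a h = h := sc_fix (fun i hi => ha i (Set.disjoint_right.1 hd hi))
    refine ⟨a, ?_, ?_⟩
    · intro i hi
      rw [Vars_div hd hg.nonempty hh.nonempty, Set.mem_union, not_or] at hi
      exact ha i hi.1
    · rw [map_div₀, e2, ha', mul_div_assoc]

lemma const_zero_aux {f : K} {c : ℝ} {a b : ℕ → ℝˣ} (ha : sc a f = 2 * f)
    (hb : sc b (f + toK (C c)) = 2 * (f + toK (C c))) : c = 0 := by
  rw [map_add, sc_C] at hb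
  have h1 : sc a (sc b f) = sc b (sc a f) := by
    rw [← sc_mul, ← sc_mul, mul_comm]
  have hb' : sc b f = 2 * f + toK (C c) := by linear_combination hb
  rw [hb', ha, map_add, map_mul, map_mul, ha, hb', sc_C, map_ofNat, map_ofNat] at h1
  have h2 : toK (C c) = 0 := by linear_combination -h1
  have h3 : (C c : P) = 0 := toK_inj (by rw [h2, map_zero])
  simpa using h3

lemma const_zero {f : K} {c : ℝ} (h1 : IsAE f) (h2 : IsAE (f + toK (C c))) : c = 0 := by
  obtain ⟨a, -, ha⟩ := h1.scaling
  obtain ⟨b, -, hb⟩ := h2.scaling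
  exact const_zero_aux ha hb

lemma const_zero_neg {f : K} {c : ℝ} (h1 : IsAE f) (h2 : IsAE (-f + toK (C c))) : c = 0 := by
  obtain ⟨a, -, ha⟩ := h1.scaling
  obtain ⟨b, -, hb⟩ := h2.scaling
  exact const_zero_aux (a := a) (f := -f) (by rw [map_neg, ha]; ring) hb

/-! ### Indecomposability of products -/

lemma mul_indec_aux {g h u v : K} (hgh : Disjoint (Vars g) (Vars h))
    (huv : Disjoint (Vars u) (Vars v)) (e : g * h = u + v) {a b : ℕ} (ha : a ∈ Vars g)
    (ha' : a ∈ Vars u) (hb : b ∈ Vars h) (hb' : b ∈ Vars v) : False := by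
  obtain ⟨z, hz⟩ := Infinite.exists_notMem_finset
    ((((vars_finite g).union (vars_finite h)).union
      ((vars_finite u).union (vars_finite v))).toFinset)
  simp only [Set.Finite.mem_toFinset, Set.mem_union, not_or] at hz
  obtain ⟨⟨zg, zh⟩, zu, zv⟩ := hz
  have fixh : permAct (Equiv.swap a z) h = h := permAct_fix (fun i hi =>
    Equiv.swap_apply_of_ne_of_ne (by rintro rfl; exact Set.disjoint_left.1 hgh ha hi)
      (by rintro rfl; exact zh hi))
  have fixv : permAct (Equiv.swap a z) v = v := permAct_fix (fun i hi =>
    Equiv.swap_apply_of_ne_of_ne (by rintro rfl; exact Set.disjoint_left.1 huv ha' hi)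
      (by rintro rfl; exact zv hi))
  have hD : permAct (Equiv.swap a z) g - g ≠ 0 := by
    intro h0
    have h1 : Vars (permAct (Equiv.swap a z) g) = Vars g := by rw [sub_eq_zero.1 h0]
    apply zg
    rw [← h1, Vars_perm]
    exact ⟨a, ha, by simp⟩
  have e' := congrArg (permAct (Equiv.swap a z)) e
  rw [map_mul, map_add, fixh, fixv] at e'
  have hh : h = (permAct (Equiv.swap a z) u - u) / (permAct (Equiv.swap a z) g - g) := by
    rw [eq_div_iff hD]
    linear_combination e' - e
  have key : ∀ w : K, b ∉ Vars w → Vars (permAct (Equiv.swap a z) w) ⊆ {b}ᶜ := by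
    intro w hw i hi
    rw [Vars_perm] at hi
    obtain ⟨j, hj, rfl⟩ := hi
    intro hjb
    have hjb' : Equiv.swap a z j = b := hjb
    have hba : b ≠ a := by rintro rfl; exact Set.disjoint_left.1 hgh ha hb
    have hbz : b ≠ z := by rintro rfl; exact zh hb
    have : j = b := by
      have h2 : Equiv.swap a z b = j := by rw [← hjb', Equiv.swap_apply_self]
      rw [← h2, Equiv.swap_apply_of_ne_of_ne hba hbz]
    rw [this] at hj
    exact hw hj
  have bg : b ∉ Vars g := Set.disjoint_right.1 hgh hb
  have bu : b ∉ Vars u := Set.disjoint_right.1 huv hb'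
  have : Vars h ⊆ {b}ᶜ := by
    rw [hh]
    exact vs_div (vs_sub (key u bu) (by simpa using bu)) (vs_sub (key g bg) (by simpa using bg))
  exact this hb rfl

lemma mul_indec {g h u v : K} (hgh : Disjoint (Vars g) (Vars h))
    (huv : Disjoint (Vars u) (Vars v)) (e : g * h = u + v) (hg : (Vars g).Nonempty)
    (hh : (Vars h).Nonempty) (hu : (Vars u).Nonempty) (hv : (Vars v).Nonempty) : False := by
  have hV : Vars g ∪ Vars h = Vars u ∪ Vars v := by
    rw [← Vars_mul hgh hg hh, e, Vars_add huv]
  have e' : g * h = v + u := by rw [e, add_comm]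
  obtain ⟨a, ha⟩ := hg
  obtain ⟨b, hb⟩ := hh
  have ha1 : a ∈ Vars u ∪ Vars v := hV ▸ Or.inl ha
  have hb1 : b ∈ Vars u ∪ Vars v := hV ▸ Or.inr hb
  rcases ha1 with ha1 | ha1 <;> rcases hb1 with hb1 | hb1
  · obtain ⟨d, hd⟩ := hv
    have : d ∈ Vars g ∪ Vars h := hV ▸ Or.inr hd
    rcases this with h1 | h1
    · exact mul_indec_aux hgh huv.symm e' h1 hd hb hb1
    · exact mul_indec_aux hgh huv e ha ha1 h1 hd
  · exact mul_indec_aux hgh huv e ha ha1 hb hb1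
  · exact mul_indec_aux hgh huv.symm e' ha ha1 hb hb1
  · obtain ⟨d, hd⟩ := hu
    have : d ∈ Vars g ∪ Vars h := hV ▸ Or.inl hd
    rcases this with h1 | h1
    · exact mul_indec_aux hgh huv e h1 hd hb hb1
    · exact mul_indec_aux hgh huv.symm e' ha ha1 h1 hd

/-! ### Splitting -/

lemma splitting {g h u v : K} (hgh : Disjoint (Vars g) (Vars h)) (e : g + h = u + v) :
    ∃ u' v' : K, g = u' + v' ∧ Vars u' ⊆ Vars g ∩ Vars u ∧ Vars v' ⊆ Vars g ∩ Vars v := by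
  classical
  obtain ⟨g1, g2, hg2, eg, vg1, vg2⟩ := inS_of_vars_subset (le_refl (Vars g))
  obtain ⟨h1, h2, hh2, eh, vh1, vh2⟩ := inS_of_vars_subset (le_refl (Vars h))
  obtain ⟨u1, u2, hu2, eu, vu1, vu2⟩ := inS_of_vars_subset (le_refl (Vars u))
  obtain ⟨v1, v2, hv2, ev, vv1, vv2⟩ := inS_of_vars_subset (le_refl (Vars v))
  have hpoly : (g1 * h2 + g2 * h1) * (u2 * v2) = (u1 * v2 + u2 * v1) * (g2 * h2) := by
    apply toK_inj
    rw [eg, eh, eu, ev, div_add_div _ _ (toK_ne hg2) (toK_ne hh2),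
      div_add_div _ _ (toK_ne hu2) (toK_ne hv2), div_eq_div_iff
      (mul_ne_zero (toK_ne hg2) (toK_ne hh2)) (mul_ne_zero (toK_ne hu2) (toK_ne hv2))] at e
    simpa using e
  obtain ⟨c, hc⟩ : ∃ c : ℕ → ℝ, eval c (g2 * h2 * (u2 * v2)) ≠ 0 := by
    by_contra hcon
    push Not at hcon
    have : g2 * h2 * (u2 * v2) = 0 := MvPolynomial.funext (by simpa using hcon)
    exact mul_ne_zero (mul_ne_zero hg2 hh2) (mul_ne_zero hu2 hv2) this
  let F : ℕ → P := fun i => if i ∈ Vars g then X i else C (c i)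
  let φ : P →ₐ[ℝ] P := bind₁ F
  have hev : ∀ p : P, eval c (φ p) = eval c p := by
    intro p
    have : ((aeval c : P →ₐ[ℝ] ℝ).comp φ) = aeval c := by
      apply MvPolynomial.algHom_ext
      intro i
      simp only [φ, F, AlgHom.comp_apply, bind₁_X_right, aeval_X]
      split_ifs <;> simp
    have h2 := AlgHom.congr_fun this p
    simpa [aeval_eq_eval] using h2
  have hne : ∀ p : P, eval c p ≠ 0 → φ p ≠ 0 := by
    intro p hp h0
    apply hp
    rw [← hev, h0, map_zero]
  simp only [map_mul] at hc
  have cg2 : φ g2 ≠ 0 := hne _ (fun h => hc (by simp [h]))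
  have ch2 : φ h2 ≠ 0 := hne _ (fun h => hc (by simp [h]))
  have cu2 : φ u2 ≠ 0 := hne _ (fun h => hc (by simp [h]))
  have cv2 : φ v2 ≠ 0 := hne _ (fun h => hc (by simp [h]))
  have hfix : ∀ p : P, (p.vars : Set ℕ) ⊆ Vars g → φ p = p := by
    intro p hp
    have := hom_congr_vars (f₁ := (φ : P →+* P)) (f₂ := RingHom.id P) (p₁ := p) (p₂ := p)
      (by ext x; simp [φ]) (fun i hi _ => by simp [φ, F, hp hi]) rfl
    simpa using this
  have hvar : ∀ (p : P) (w : K), (p.vars : Set ℕ) ⊆ Vars w →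
      ((φ p).vars : Set ℕ) ⊆ Vars g ∩ Vars w := by
    intro p w hp i hi
    have := vars_bind₁ F p hi
    rw [Finset.mem_biUnion] at this
    obtain ⟨j, hj, hij⟩ := this
    simp only [F] at hij
    split_ifs at hij with hjg
    · rw [vars_X, Finset.mem_singleton] at hij
      subst hij
      exact ⟨hjg, hp hj⟩
    · simp at hij
  have hpoly' := congrArg φ hpoly
  simp only [map_mul, map_add] at hpoly'
  rw [hfix g1 vg1, hfix g2 vg2] at hpoly'
  have hpK := congrArg toK hpoly'
  simp only [map_mul, map_add] at hpK
  have n1 := toK_ne hg2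
  have n2 := toK_ne ch2
  have n3 := toK_ne cu2
  have n4 := toK_ne cv2
  have hconst : Vars (toK (φ h1) / toK (φ h2)) ⊆ ∅ := by
    apply vars_subset_of_inS
    have hd : Vars g ∩ Vars h = ∅ := Set.disjoint_iff_inter_eq_empty.1 hgh
    exact ⟨φ h1, φ h2, ch2, rfl, hd ▸ hvar h1 h vh1, hd ▸ hvar h2 h vh2⟩
  refine ⟨toK (φ u1) / toK (φ u2),
    toK (φ v1) / toK (φ v2) - toK (φ h1) / toK (φ h2), ?_, ?_, ?_⟩
  · have h5 : toK g1 / toK g2 + toK (φ h1) / toK (φ h2) =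
        toK (φ u1) / toK (φ u2) + toK (φ v1) / toK (φ v2) := by
      rw [div_add_div _ _ n1 n2, div_add_div _ _ n3 n4,
        div_eq_div_iff (mul_ne_zero n1 n2) (mul_ne_zero n3 n4)]
      exact hpK
    rw [← eg] at h5
    linear_combination h5
  · exact vars_subset_of_inS ⟨_, _, cu2, rfl, hvar u1 u vu1, hvar u2 u vu2⟩
  · refine vs_sub ?_ (hconst.trans (Set.empty_subset _))
    exact vars_subset_of_inS ⟨_, _, cv2, rfl, hvar v1 v vv1, hvar v2 v vv2⟩

/-! ### Additive parts of expressions -/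

lemma Vars_addC (f : K) (c : ℝ) : Vars (f + toK (C c)) = Vars f := by
  rw [Vars_add (by rw [Vars_const]; exact Set.disjoint_empty _), Vars_const, Set.union_empty]

lemma disj_const {f : K} {A B : Set ℕ} (hA : Vars f ⊆ A) (hB : Vars f ⊆ B) (hd : Disjoint A B) :
    ∃ c : ℝ, f = toK (C c) :=
  eq_const (fun _ hi => Set.disjoint_left.1 hd (hA hi) (hB hi))

lemma empty_const {f : K} (h : ¬ (Vars f).Nonempty) : ∃ c : ℝ, f = toK (C c) :=
  eq_const (Set.not_nonempty_iff_eq_empty.1 h).le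

/-- Additive parts of `f` are, up to constants, in `𝒜(+,×,÷)`. -/
def AddPart (f : K) : Prop := ∀ u v : K, Disjoint (Vars u) (Vars v) → f = u + v →
  (Vars u).Nonempty → ∃ c : ℝ, AP (u + toK (C c))

lemma part_of_indec {f : K} (hf : AP f)
    (h : ∀ u v : K, Disjoint (Vars u) (Vars v) → f = u + v → (Vars u).Nonempty →
      (Vars v).Nonempty → False) : AddPart f := by
  intro u v hd e hu
  by_cases hv : (Vars v).Nonempty
  · exact (h u v hd e hu hv).elim
  · obtain ⟨c, hc⟩ := empty_const hv
    exact ⟨c, by rw [← hc, ← e]; exact hf⟩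

lemma AP_X (i : ℕ) : AP (Xv i) := ⟨Op.mul, by simp, EndsWith.var i⟩

lemma part_X (i : ℕ) : AddPart (Xv i) := by
  refine part_of_indec (AP_X i) ?_
  intro u v hd e ⟨a, ha⟩ ⟨b, hb⟩
  have h : Vars u ∪ Vars v = {i} := by rw [← Vars_add hd, ← e, Vars_X]
  have h1 : a = i := by
    have : a ∈ Vars u ∪ Vars v := Or.inl ha
    rwa [h] at this
  have h2 : b = i := by
    have : b ∈ Vars u ∪ Vars v := Or.inr hb
    rwa [h] at this
  subst h1
  subst h2
  exact Set.disjoint_left.1 hd ha hb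

lemma part_mul {g h : K} (hg : IsAE g) (hh : IsAE h) (hd : Disjoint (Vars g) (Vars h))
    (hf : AP (g * h)) : AddPart (g * h) :=
  part_of_indec hf (fun _ _ huv e hu hv => mul_indec hd huv e hg.nonempty hh.nonempty hu hv)

lemma part_div {g h : K} (hg : IsAE g) (hh : IsAE h) (hd : Disjoint (Vars g) (Vars h))
    (hf : AP (g / h)) : AddPart (g / h) := by
  refine part_of_indec hf (fun _ _ huv e hu hv => ?_)
  rw [div_eq_mul_inv] at e
  exact mul_indec (by rwa [Vars_inv]) huv e hg.nonempty (by rw [Vars_inv]; exact hh.nonempty) hu hv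

lemma part_add {g h : K} (hd : Disjoint (Vars g) (Vars h)) (pg : AddPart g) (ph : AddPart h) :
    AddPart (g + h) := by
  intro u v huv e hu
  obtain ⟨ug, vg, eg, hug, hvg⟩ := splitting hd e
  obtain ⟨uh, vh, eh, huh, hvh⟩ := splitting hd.symm ((add_comm h g).trans e)
  have ek : u - ug - uh = vg + vh - v := by linear_combination eg + eh - e
  obtain ⟨k, hk⟩ : ∃ k : ℝ, u - ug - uh = toK (C k) := by
    refine disj_const (A := Vars u) (B := Vars v) ?_ ?_ huv
    · exact vs_sub (vs_sub le_rfl (hug.trans Set.inter_subset_right))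
        (huh.trans Set.inter_subset_right)
    · rw [ek]
      exact vs_sub (vs_add (hvg.trans Set.inter_subset_right)
        (hvh.trans Set.inter_subset_right)) le_rfl
  have dg : Disjoint (Vars ug) (Vars vg) :=
    huv.mono (hug.trans Set.inter_subset_right) (hvg.trans Set.inter_subset_right)
  have dh : Disjoint (Vars uh) (Vars vh) :=
    huv.mono (huh.trans Set.inter_subset_right) (hvh.trans Set.inter_subset_right)
  by_cases h1 : (Vars ug).Nonempty
  · obtain ⟨c, hc⟩ := pg ug vg dg eg h1
    by_cases h2 : (Vars uh).Nonempty
    · obtain ⟨d, hd'⟩ := ph uh vh dh eh h2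
      refine ⟨c + d - k, ?_⟩
      have := hc.add hd' (by
        rw [Vars_addC, Vars_addC]
        exact hd.mono (hug.trans Set.inter_subset_left) (huh.trans Set.inter_subset_left))
      convert this using 1
      simp only [map_add, map_sub]
      linear_combination hk
    · obtain ⟨m, hm⟩ := empty_const h2
      refine ⟨c - m - k, ?_⟩
      convert hc using 1
      simp only [map_sub]
      linear_combination hk + hm
  · obtain ⟨m, hm⟩ := empty_const h1
    by_cases h2 : (Vars uh).Nonempty
    · obtain ⟨d, hd'⟩ := ph uh vh dh eh h2
      refine ⟨d - m - k, ?_⟩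
      convert hd' using 1
      simp only [map_sub]
      linear_combination hk + hm
    · obtain ⟨m', hm'⟩ := empty_const h2
      exfalso
      have : u = toK (C (m + m' + k)) := by
        simp only [map_add]
        linear_combination hk + hm + hm'
      rw [this, Vars_const] at hu
      exact Set.not_nonempty_empty hu

lemma EndsWith.part {f : K} {o : Op} (h : EndsWith f o) (ho : o ≠ Op.sub) : AddPart f := by
  induction h with
  | var i => exact part_X i
  | add_base hij => exact part_add (disj_X hij) (part_X _) (part_X _)
  | sub_base hij => exact (ho rfl).elim
  | mul_base hij =>
    exact part_mul (IsAE.var _) (IsAE.var _) (disj_X hij) ⟨_, ho, EndsWith.mul_base hij⟩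
  | div_base hij =>
    exact part_div (IsAE.var _) (IsAE.var _) (disj_X hij) ⟨_, ho, EndsWith.div_base hij⟩
  | add_rec hg hh hd h3 h1 h2 _ _ ihg ihh => exact part_add hd (ihg h1) (ihh h2)
  | mul_rec hg hh hd h3 h1 h2 e1 e2 ihg ihh =>
    exact part_mul hg hh hd ⟨_, ho, EndsWith.mul_rec hg hh hd h3 h1 h2 e1 e2⟩
  | div_rec hg hh hd h3 h1 h2 e1 e2 ihg ihh =>
    exact part_div hg hh hd ⟨_, ho, EndsWith.div_rec hg hh hd h3 h1 h2 e1 e2⟩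
  | sub_rec => exact (ho rfl).elim

lemma AP.part {f : K} (h : AP f) : AddPart f := by
  obtain ⟨o, ho, h⟩ := h
  exact h.part ho

lemma AP.parts {f u v : K} (h : AP f) (hd : Disjoint (Vars u) (Vars v)) (e : f = u + v)
    (hu : (Vars u).Nonempty) (hv : (Vars v).Nonempty) :
    ∃ c : ℝ, AP (u + toK (C c)) ∧ AP (v + toK (C (-c))) := by
  obtain ⟨c, hc⟩ := h.part u v hd e hu
  obtain ⟨d, hd'⟩ := h.part v u hd.symm (by rw [e, add_comm]) hv
  have h1 := hc.add hd' (by rwa [Vars_addC, Vars_addC])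
  have h2 : c + d = 0 := by
    apply const_zero h.isAE
    convert h1.isAE using 1
    rw [e]
    simp only [map_add]
    ring
  have h3 : d = -c := by linarith
  subst h3
  exact ⟨c, hc, hd'⟩

/-- If `u + w ∈ 𝒜(+,×,÷)` and `u ∈ 𝒜` then `w ∈ 𝒜(+,×,÷)`. -/
lemma AP.part_exact {f u v : K} (h : AP f) (hd : Disjoint (Vars u) (Vars v)) (e : f = u + v)
    (hu : IsAE u) (hv : (Vars v).Nonempty) : AP v := by
  obtain ⟨c, h1, h2⟩ := h.parts hd e hu.nonempty hv
  have : c = 0 := const_zero hu h1.isAE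
  subst this
  simpa using h2

lemma firstType_part {h u v : K} (hh : AP h) (hF : FirstType h)
    (hd : Disjoint (Vars u) (Vars v)) (e : h = u + v) (hu : (Vars u).Nonempty) {c : ℝ}
    (hc : IsAE (-u + toK (C c))) : False := by
  have key : ∀ d : ℝ, IsAE (u + toK (C d)) → IsAE (-(u + toK (C d))) := by
    intro d hd'
    have : c + d = 0 := by
      apply const_zero_neg hd'
      convert hc using 1
      simp only [map_add]
      ring
    have h2 : c = -d := by linarith
    convert hc using 1
    rw [h2]
    simp only [map_neg]
    ring
  by_cases hv : (Vars v).Nonempty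
  · obtain ⟨d, h1, h2⟩ := hh.parts hd e hu hv
    apply hF.2
    have := (key d h1.isAE).sub h2.isAE (by rwa [Vars_neg, Vars_addC, Vars_addC])
    convert this using 1
    rw [e]
    simp only [map_neg]
    ring
  · obtain ⟨d, hd'⟩ := empty_const hv
    rw [hd'] at e
    apply hF.2
    rw [e]
    exact key d (e ▸ hF.1)

lemma cross {g h g' h' : K} (hg : AP g) (hh' : AP h') (hF : FirstType h')
    (e : g - h = g' - h') (hd : Disjoint (Vars g) (Vars h))
    (hd' : Disjoint (Vars g') (Vars h')) : Disjoint (Vars g) (Vars h') := by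
  obtain ⟨p, q, eg, hp, hq⟩ := splitting (g := g) (h := -h) (u := g') (v := -h')
    (by rwa [Vars_neg]) (by linear_combination e)
  obtain ⟨a, b, eh, ha, hb⟩ := splitting (g := -h') (h := g') (u := g) (v := -h)
    (by rw [Vars_neg]; exact hd'.symm) (by linear_combination -e)
  rw [Vars_neg] at hq ha hb
  rw [Vars_neg] at hb
  have ek : q - a = g' + h - p + b := by linear_combination e - eg + eh
  obtain ⟨k, hk⟩ : ∃ k : ℝ, q - a = toK (C k) := by
    refine disj_const (A := Vars g ∩ Vars h') (B := Vars g' ∪ Vars h) ?_ ?_ ?_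
    · exact vs_sub hq (fun i hi => ⟨(ha hi).2, (ha hi).1⟩)
    · rw [ek]
      refine vs_add (vs_sub (vs_add Set.subset_union_left Set.subset_union_right) ?_) ?_
      · exact fun i hi => Or.inl (hp hi).2
      · exact fun i hi => Or.inr (hb hi).2
    · rw [Set.disjoint_left]
      rintro i ⟨h1, h2⟩ (h3 | h3)
      · exact Set.disjoint_left.1 hd' h3 h2
      · exact Set.disjoint_left.1 hd h1 h3
  by_cases hqn : (Vars q).Nonempty
  · exfalso
    obtain ⟨c, hc⟩ := hg.part q p
      (hd'.symm.mono (hq.trans Set.inter_subset_right) (hp.trans Set.inter_subset_right))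
      (by rw [eg, add_comm]) hqn
    have ea : q = a + toK (C k) := by linear_combination hk
    have han : (Vars a).Nonempty := by rwa [ea, Vars_addC] at hqn
    refine firstType_part (u := -a) (v := -b) (c := c + k) hh' hF ?_ ?_ ?_ ?_
    · rw [Vars_neg, Vars_neg]
      exact hd.mono (ha.trans Set.inter_subset_right) (hb.trans Set.inter_subset_right)
    · linear_combination -eh
    · rwa [Vars_neg]
    · convert hc.isAE using 1
      simp only [map_add]
      linear_combination -hk
  · obtain ⟨c, hc⟩ := empty_const hqn
    have : Vars g = Vars p := by rw [eg, hc, Vars_addC]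
    rw [this]
    exact hd'.mono (hp.trans Set.inter_subset_right) le_rfl

/-! ### Gluing permutations -/

lemma glue (σ τ : Equiv.Perm ℕ) {A B D : Set ℕ} (hσ : σ '' A = B) (hτ : τ '' D = D)
    (hAB : Disjoint A B) (hAD : Disjoint A D) (hBD : Disjoint B D) :
    ∃ ρ : Equiv.Perm ℕ, (∀ i ∈ A, ρ i = σ i) ∧ (∀ i ∈ B, ρ i = σ⁻¹ i) ∧
      (∀ i ∈ D, ρ i = τ i) := by
  classical
  let F : Equiv.Perm ℕ → ℕ → ℕ := fun t i =>
    if i ∈ A then σ i else if i ∈ B then σ⁻¹ i else if i ∈ D then t i else i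
  have fA : ∀ t, ∀ i ∈ A, F t i = σ i := fun t i hi => by simp [F, hi]
  have fB : ∀ t, ∀ i ∈ B, F t i = σ⁻¹ i := fun t i hi => by
    simp [F, hi, Set.disjoint_right.1 hAB hi]
  have fD : ∀ t, ∀ i ∈ D, F t i = t i := fun t i hi => by
    simp [F, hi, Set.disjoint_right.1 hAD hi, Set.disjoint_right.1 hBD hi]
  have fN : ∀ t, ∀ i, i ∉ A → i ∉ B → i ∉ D → F t i = i := fun t i h1 h2 h3 => by
    simp [F, h1, h2, h3]
  have mB : ∀ i ∈ A, σ i ∈ B := fun i hi => hσ ▸ ⟨i, hi, rfl⟩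
  have mA : ∀ i ∈ B, σ⁻¹ i ∈ A := by
    intro i hi
    rw [← hσ] at hi
    obtain ⟨j, hj, rfl⟩ := hi
    simpa using hj
  have key : ∀ s t : Equiv.Perm ℕ, (∀ i, t (s i) = i) → (∀ i ∈ D, s i ∈ D) →
      Function.LeftInverse (F t) (F s) := by
    intro s t hst hsD i
    by_cases h1 : i ∈ A
    · rw [fA s i h1, fB t _ (mB i h1)]; simp
    · by_cases h2 : i ∈ B
      · rw [fB s i h2, fA t _ (mA i h2)]; simp
      · by_cases h3 : i ∈ D
        · rw [fD s i h3, fD t _ (hsD i h3), hst]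
        · rw [fN s i h1 h2 h3, fN t i h1 h2 h3]
  have tD : ∀ i ∈ D, τ i ∈ D := fun i hi => by
    rw [← hτ]
    exact ⟨i, hi, rfl⟩
  have tD' : ∀ i ∈ D, τ⁻¹ i ∈ D := by
    intro i hi
    rw [← hτ] at hi
    obtain ⟨j, hj, rfl⟩ := hi
    simpa using hj
  exact ⟨⟨F τ, F τ⁻¹, key τ τ⁻¹ (by simp) tD, key τ⁻¹ τ (by simp) tD'⟩, fA τ, fB τ, fD τ⟩

/-! ### The main statement -/

lemma exists_subDecomp {f : K} (hsub : EndsWith f Op.sub) : ∃ g h : K, SubDecomp f g h := by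
  cases hsub with
  | @sub_base i j hij =>
    exact ⟨Xv i, Xv j, IsAE.var i, IsAE.var j, AP_iff.1 (AP_X i), AP_iff.1 (AP_X j),
      firstType_X j, disj_X hij, (Vars_sub (disj_X hij)).symm, rfl⟩
  | @sub_rec g h o₁ o₂ hg hh hd h3 h1 h2 hF e1 e2 =>
    exact ⟨g, h, hg, hh, AP_iff.1 ⟨o₁, h1, e1⟩, AP_iff.1 ⟨o₂, h2, e2⟩, hF, hd,
      (Vars_sub hd).symm, rfl⟩

lemma subDecomp_unique {f g h g' h' : K} (H : SubDecomp f g h) (H' : SubDecomp f g' h') :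
    g = g' ∧ h = h' := by
  obtain ⟨hg, hh, Pg, Ph, hF, hd, hV, e⟩ := H
  obtain ⟨hg', hh', Pg', Ph', hF', hd', hV', e'⟩ := H'
  rw [← AP_iff] at Pg Ph Pg' Ph'
  have ee : g - h = g' - h' := by rw [← e, ← e']
  have d1 := cross Pg Ph' hF' ee hd hd'
  have d2 := cross Pg' Ph hF ee.symm hd' hd
  obtain ⟨c, hc⟩ : ∃ c : ℝ, g' - g = toK (C c) := by
    refine disj_const (A := Vars g' ∪ Vars g) (B := Vars h' ∪ Vars h)
      (vs_sub Set.subset_union_left Set.subset_union_right) ?_ ?_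
    · rw [show g' - g = h' - h by linear_combination -ee]
      exact vs_sub Set.subset_union_left Set.subset_union_right
    · simp only [Set.disjoint_union_left, Set.disjoint_union_right]
      exact ⟨⟨hd', d1⟩, d2, hd⟩
  have ec : g' = g + toK (C c) := by linear_combination hc
  have c0 : c = 0 := const_zero hg (ec ▸ hg')
  have : g' = g := by rw [ec, c0]; simp
  subst this
  exact ⟨rfl, by linear_combination -ee⟩

lemma third_forward {f g h : K} (H : SubDecomp f g h) (T : ThirdType f) :
    Iso g h ∨ ∃ G : K, IsAE G ∧ EndsIn G {Op.add, Op.mul, Op.div} ∧ ThirdType G ∧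
            Disjoint (Vars G) (Vars h) ∧ Iso g (G + h) := by
  obtain ⟨hg, hh, Pg, Ph, hF, hd, hV, e⟩ := H
  rw [← AP_iff] at Pg Ph
  obtain ⟨_, hfn, σ, hσ⟩ := T
  rw [e, map_sub] at hσ
  set g₁ := permAct σ g with hg₁
  set h₁ := permAct σ h with hh₁
  have hd1 : Disjoint (Vars g₁) (Vars h₁) := disj_perm σ hd
  have e1 : h - g = g₁ - h₁ := by linear_combination -hσ
  have dh : Disjoint (Vars h) (Vars h₁) :=
    cross Ph (Ph.perm σ) (hF.perm σ) e1 hd.symm hd1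
  obtain ⟨p, q₀, ep, hp, hq₀⟩ := splitting (g := g₁) (h := -h₁) (u := h) (v := -g)
    (by rwa [Vars_neg]) (by linear_combination -e1)
  rw [Vars_neg] at hq₀
  obtain ⟨k, hk⟩ : ∃ k : ℝ, h - p = toK (C k) := by
    refine disj_const (A := Vars h) (B := Vars g ∪ Vars h₁)
      (vs_sub le_rfl (hp.trans Set.inter_subset_right)) ?_ ?_
    · rw [show h - p = g + q₀ - h₁ by linear_combination e1 + ep]
      exact vs_sub (vs_add Set.subset_union_left
        (fun i hi => Or.inl (hq₀ hi).2)) Set.subset_union_right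
    · simp only [Set.disjoint_union_right]
      exact ⟨hd.symm, dh⟩
  obtain ⟨q, hq⟩ : ∃ q : K, q = q₀ + toK (C (-k)) := ⟨_, rfl⟩
  have hqV : Vars q ⊆ Vars g₁ ∩ Vars g := by rw [hq, Vars_addC]; exact hq₀
  have E1 : g₁ = h + q := by
    rw [hq]
    simp only [map_neg]
    linear_combination ep - hk
  have E2 : g = h₁ + -q := by linear_combination -e1 - E1
  have dhq : Disjoint (Vars h) (Vars q) := hd.symm.mono le_rfl (hqV.trans Set.inter_subset_right)
  have dhq1 : Disjoint (Vars h₁) (Vars q) :=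
    hd1.symm.mono le_rfl (hqV.trans Set.inter_subset_left)
  by_cases hqn : (Vars q).Nonempty
  · right
    have A1 : AP q := (Pg.perm σ).part_exact dhq E1 hh hqn
    have A2 : AP (-q) := Pg.part_exact (by rwa [Vars_neg]) E2 (hh.perm σ) (by rwa [Vars_neg])
    have E3 : g₁ = permAct σ h₁ - permAct σ q := by
      rw [hg₁, E2, map_add, map_neg]
      ring
    have dx : Disjoint (Vars (permAct σ q)) (Vars h) := by
      refine cross (h := permAct σ h₁) (g' := -q) (A1.perm σ) Ph hF ?_
        (disj_perm σ dhq1).symm ?_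
      · linear_combination E3 - E1
      · rw [Vars_neg]; exact dhq.symm
    have hsubs : Vars h ⊆ Vars (permAct σ h₁) := by
      intro i hi
      have h1 : i ∈ Vars g₁ := by
        rw [E1, Vars_add dhq]
        exact Or.inl hi
      rw [E3, Vars_sub (disj_perm σ dhq1)] at h1
      rcases h1 with h1 | h1
      · exact h1
      · exact (Set.disjoint_right.1 dx hi h1).elim
    have hVeq : Vars h = Vars (permAct σ h₁) := by
      apply Set.eq_of_subset_of_ncard_le hsubs _ (vars_finite _)
      rw [ncard_perm, hh₁, ncard_perm]
    obtain ⟨m, hm⟩ : ∃ m : ℝ, permAct σ h₁ - h = toK (C m) := by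
      refine disj_const (A := Vars h) (B := Vars (permAct σ q) ∪ Vars q)
        (vs_sub hVeq.ge le_rfl) ?_ ?_
      · rw [show permAct σ h₁ - h = permAct σ q + q by linear_combination E1 - E3]
        exact vs_add Set.subset_union_left Set.subset_union_right
      · simp only [Set.disjoint_union_right]
        exact ⟨dx.symm, dhq⟩
    have em : permAct σ h₁ = h + toK (C m) := by linear_combination hm
    have m0 : m = 0 := const_zero hh (em ▸ (hh.perm σ).perm σ)
    rw [m0] at hm
    simp only [map_zero] at hm
    refine ⟨q, A1.isAE, AP_iff.1 A1, ⟨A1.isAE, A2.isAE, σ, ?_⟩, dhq.symm, σ, ?_⟩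
    · linear_combination E3 - E1 + hm
    · rw [← hg₁, E1, add_comm]
  · left
    obtain ⟨c, hc⟩ := empty_const hqn
    rw [hc] at E1
    have c0 : c = 0 := const_zero hh (E1 ▸ hg.perm σ)
    refine ⟨σ, ?_⟩
    rw [← hg₁, E1, c0]
    simp

lemma third_backward {f g h : K} (H : SubDecomp f g h)
    (T : Iso g h ∨ ∃ G : K, IsAE G ∧ EndsIn G {Op.add, Op.mul, Op.div} ∧ ThirdType G ∧
            Disjoint (Vars G) (Vars h) ∧ Iso g (G + h)) : ThirdType f := by
  obtain ⟨hg, hh, Pg, Ph, hF, hd, hV, e⟩ := H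
  have en : -f = h - g := by rw [e]; ring
  refine ⟨e ▸ hg.sub hh hd, en ▸ hh.sub hg hd.symm, ?_⟩
  rcases T with ⟨σ, hσ⟩ | ⟨G, hG, _, ⟨_, _, τ, hτ⟩, hGd, σ, hσ⟩
  · have hi : permAct σ⁻¹ h = g := by rw [← hσ, permAct_inv_left]
    obtain ⟨ρ, h1, h2, -⟩ := glue σ 1 (A := Vars g) (B := Vars h) (D := ∅)
      (by rw [← Vars_perm, hσ]) (by simp) hd (Set.disjoint_empty _) (Set.disjoint_empty _)
    refine ⟨ρ, ?_⟩
    rw [en, e, map_sub, permAct_congr h1, permAct_congr h2, hσ, hi]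
  · obtain ⟨q, hq⟩ : ∃ q : K, q = permAct σ⁻¹ G := ⟨_, rfl⟩
    obtain ⟨p, hp⟩ : ∃ p : K, p = permAct σ⁻¹ h := ⟨_, rfl⟩
    have hsp : permAct σ p = h := by rw [hp, permAct_inv_right]
    have hsq : permAct σ q = G := by rw [hq, permAct_inv_right]
    have eg : g = q + p := by
      rw [hp, hq, ← map_add, ← hσ, permAct_inv_left]
    have dqp : Disjoint (Vars q) (Vars p) := by rw [hp, hq]; exact disj_perm _ hGd
    rw [eg, Vars_add dqp, Set.disjoint_union_left] at hd
    have ht : permAct (σ⁻¹ * τ * σ) q = -q := by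
      rw [permAct_mul, permAct_mul, hsq, hτ, map_neg, ← hq]
    obtain ⟨ρ, h1, h2, h3⟩ := glue σ (σ⁻¹ * τ * σ) (A := Vars p) (B := Vars h) (D := Vars q)
      (by rw [← Vars_perm, hsp]) (by rw [← Vars_perm, ht, Vars_neg]) hd.2 dqp.symm hd.1.symm
    refine ⟨ρ, ?_⟩
    rw [en, e, eg, map_sub, map_add, permAct_congr h1, permAct_congr h2, permAct_congr h3,
      hsp, ← hp, ht]
    ring

/-- Every `f ∈ 𝒜(−)` can be expressed uniquely as `f = g − h` with
`g, h ∈ 𝒜(+,×,÷)`, disjoint variable sets whose union is `𝒱(f)`, and `h` of the first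
type. Moreover, `f` is of the third type iff either `g ≅ h`, or `g ≅ G + h` for some
`G ∈ 𝒜(+,×,÷)` of the third type with `𝒱(G) ∩ 𝒱(h) = ∅`. -/
theorem sub_decomposition (f : K) (hf : IsAE f) (hsub : EndsWith f Op.sub) :
    (∃! gh : K × K, SubDecomp f gh.1 gh.2) ∧
    ∀ g h : K, SubDecomp f g h →
      (ThirdType f ↔
        (Iso g h ∨
          ∃ G : K, IsAE G ∧ EndsIn G {Op.add, Op.mul, Op.div} ∧ ThirdType G ∧
            Disjoint (Vars G) (Vars h) ∧ Iso g (G + h))) := by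
  refine ⟨?_, fun g h H => ⟨third_forward H, third_backward H⟩⟩
  obtain ⟨g, h, H⟩ := exists_subDecomp hsub
  refine ⟨(g, h), H, ?_⟩
  rintro ⟨g', h'⟩ H'
  obtain ⟨h1, h2⟩ := subDecomp_unique H' H
  exact Prod.ext h1 h2

end
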